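/- Let μ and ν be compactly supported probability measures on ℝ with μ nondegenerate, and let ρ be a free additive convolution of μ and ν. Then: (a) dom(F̂_{μ,ν}) is an open interval of the form (−∞, h_max); (b) there is h₀ ∈ dom(F̂_{μ,ν}) such that F̂_{μ,ν}′(h) > 0 for all h ∈ dom(F̂_{μ,ν}) with h < h₀; (c) g*_ρ = lim_{h↑h*_{μ,ν}} G_ν(h); (d) z*_ρ = lim_{h↑h*_{μ,ν}} F̂_{μ,ν}(h) = sup{ F̂_{μ,ν}(h) : h ∈ Ĥ_{μ,ν} }. -/

import Mathlib

/-!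
The function `F̂` is the real right inverse of the subordination function `ω₂ = G_ν⁻¹ ∘ G_ρ`, and the
point is to show that this inversion works exactly up to the left edge of `ρ`. By definition of the
free additive convolution, `G_ρ (F̂ h) = G_ν h` for `h` near `-∞` (`sub_eventually`). As `F̂` is
analytic and strictly increasing on `(-∞, h*)`, the identity persists there as long as
`F̂ < aInf ρ`.

`F̂` cannot reach `aInf ρ` before `h*` (`Fhat_lt_aInf`): otherwise `G_ρ = G_ν ∘ F̂⁻¹` would continue
analytically past the edge of `ρ`, against Pringsheim's theorem (`no_analytic_extension`): the
Taylor coefficients of a Stieltjes transform left of the support are positive moments, and they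
grow too fast to converge beyond the edge.

Conversely suppose that `F̂` increases to some `Z < aInf ρ` as `h ↑ h*`. On `(-∞, Z)` the functions
`ω₁ = G_μ⁻¹ ∘ G_ρ` and `ω₂` satisfy `ω₁ = z + H_ν(ω₂)` and `ω₂ = z + H_μ(ω₁)`, where
`H(w) = -1/G(w) - w`. All derivatives of `H` of positive order are nonnegative left of the support
(`iteratedDeriv_Hst_nonneg`): the moments are log-convex, so Kaluza's theorem applies to `1/G`. By
implicit differentiation the same holds for `ω₁` and `ω₂` (`iteratedDeriv_nonneg_of_coupled`).
Since `ω₁ + ω₂ = z - 1/G_ρ(z)` is analytic at `Z`, its Taylor coefficients dominate those of `ω₁`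
and `ω₂`, which therefore extend analytically to `Z` (`extend_of_taylor_le`) with derivative at
least `1`. By Pringsheim's theorem again, the extended values are strictly left of the edges of
`μ` and `ν`. Hence `h* = ω₂(Z)` belongs to the domain of `F̂`, and `F̂ ∘ ω₂ = id` forces
`F̂'(h*) > 0`, contradicting the choice of `h*`. So `F̂ h ↑ aInf ρ` as `h ↑ h*` (`sSup_Fhat_Iio`).
-/

open MeasureTheory Filter Set

noncomputable section

/-- The topological support of a Borel measure on `ℝ`. -/
def msupp (μ : Measure ℝ) : Set ℝ := {x : ℝ | ∀ U ∈ nhds x, μ U ≠ 0}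

/-- Compact support: some compact set has full measure. -/
def HasCompactSupp (μ : Measure ℝ) : Prop := ∃ K : Set ℝ, IsCompact K ∧ μ K = 1

/-- `a_μ`, the infimum of the support. -/
def aInf (μ : Measure ℝ) : ℝ := sInf (msupp μ)

/-- `b_μ`, the supremum of the support. -/
def bSup (μ : Measure ℝ) : ℝ := sSup (msupp μ)

/-- The (real) Stieltjes transform `G_μ(z) = ∫ (λ - z)⁻¹ dμ(λ)`. -/
def Gst (μ : Measure ℝ) (z : ℝ) : ℝ := ∫ l, (l - z)⁻¹ ∂μ

/-- `G_μ(a_μ) = lim_{z ↑ a_μ} G_μ(z) ∈ (0,∞]`, as the supremum (in `EReal`) of the values of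
`G_μ` on `(-∞, a_μ)` (the two agree since `G_μ` is increasing there). -/
def GaSup (μ : Measure ℝ) : EReal :=
  sSup ((fun z => ((Gst μ z : ℝ) : EReal)) '' Set.Iio (aInf μ))

/-- `G_μ(b_μ) = lim_{z ↓ b_μ} G_μ(z) ∈ [-∞,0)`, as the infimum (in `EReal`) of the values of
`G_μ` on `(b_μ, ∞)` (the two agree since `G_μ` is increasing there). -/
def GbInf (μ : Measure ℝ) : EReal :=
  sInf ((fun z => ((Gst μ z : ℝ) : EReal)) '' Set.Ioi (bSup μ))

/-- The interval `D̂_μ = (-G_μ(a_μ), -G_μ(b_μ)) ⊆ ℝ`. -/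
def Dhat (μ : Measure ℝ) : Set ℝ :=
  {u : ℝ | -(GaSup μ) < (u : EReal) ∧ (u : EReal) < -(GbInf μ)}

/-- The inverse `G_μ^⟨-1⟩` of the restriction of `G_μ` to `ℝ ∖ [a_μ, b_μ]`. -/
def Ginv (μ : Measure ℝ) (g : ℝ) : ℝ :=
  Function.invFunOn (Gst μ) (Set.Iio (aInf μ) ∪ Set.Ioi (bSup μ)) g

/-- The real `R`-transform `R̂_μ(u) = G_μ^⟨-1⟩(-u) - u⁻¹`, meaningful for `u ∈ D̂_μ ∖ {0}`. -/
def Rhat (μ : Measure ℝ) (u : ℝ) : ℝ := Ginv μ (-u) - u⁻¹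

/-- `ρ` is a free additive convolution of `μ` and `ν`. -/
def IsFreeAdd (μ ν ρ : Measure ℝ) : Prop :=
  IsProbabilityMeasure ρ ∧ HasCompactSupp ρ ∧
  ∃ ε > (0 : ℝ), ∀ u : ℝ, u ∈ Set.Ioo (-ε) ε → u ≠ 0 →
    u ∈ Dhat ρ ∧ u ∈ Dhat μ ∧ u ∈ Dhat ν ∧ Rhat ρ u = Rhat μ u + Rhat ν u

/-- `μ` is nondegenerate: not a point mass. -/
def Nondeg (μ : Measure ℝ) : Prop := ¬ ∃ c : ℝ, μ = Measure.dirac c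

/-- The logarithmic potential `U_ρ(z) = ∫ log |z - λ| dρ(λ)`. -/
def Upot (ρ : Measure ℝ) (z : ℝ) : ℝ := ∫ l, Real.log |z - l| ∂ρ

/-- `E_{μ,ν,z}(g) = ∫₀^g s R̂_μ'(-s) ds + ∫ log (λ - z + R̂_μ(-g)) dν(λ)`. -/
def Efun (μ ν : Measure ℝ) (z : ℝ) (g : ℝ) : ℝ :=
  (∫ s in (0:ℝ)..g, s * deriv (Rhat μ) (-s)) + ∫ l, Real.log (l - z + Rhat μ (-g)) ∂ν

/-- The domain `Ê_{μ,ν,z}` of `E_{μ,ν,z}`. -/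
def Ehat (μ ν : Measure ℝ) (z : ℝ) : Set ℝ :=
  {g : ℝ | -g ∈ Dhat μ ∧ g ≠ 0 ∧ z - Rhat μ (-g) < aInf ν}

/-- `F̂_{μ,ν}(h) = R̂_μ(-G_ν(h)) + h`. -/
def Fhat (μ ν : Measure ℝ) (h : ℝ) : ℝ := Rhat μ (-(Gst ν h)) + h

/-- The domain of `F̂_{μ,ν}`. -/
def FhatDom (μ ν : Measure ℝ) : Set ℝ := {h : ℝ | h < aInf ν ∧ -(Gst ν h) ∈ Dhat μ}

/-- `Ĥ_{μ,ν}`: points of the domain to the left of which `F̂_{μ,ν}'` is positive. -/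
def Hhat (μ ν : Measure ℝ) : Set ℝ :=
  {h : ℝ | h ∈ FhatDom μ ν ∧ ∀ t ∈ FhatDom μ ν, t < h → 0 < deriv (Fhat μ ν) t}

/-- `h*_{μ,ν} = sup Ĥ_{μ,ν}`. -/
def hstar (μ ν : Measure ℝ) : ℝ := sSup (Hhat μ ν)

end

/-! ### Analytic continuation by Taylor coefficients -/

/-- The `n`-th Taylor coefficient of `f` at `z`. -/
noncomputable def tcoef (f : ℝ → ℝ) (z : ℝ) (n : ℕ) : ℝ := iteratedDeriv n f z / n.factorial

/-- Near a point of analyticity, Taylor series at nearby centres converge absolutely on discs of a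
uniform size. -/
lemma taylor_summable {f : ℝ → ℝ} {a : ℝ} (hf : AnalyticAt ℝ f a) :
    ∃ r > 0, ∀ z x : ℝ, 0 ≤ x → |z - a| + x < r → Summable fun n => |tcoef f z n| * x ^ n := by
  obtain ⟨p, R, hp⟩ := hf
  obtain ⟨r, hr0, hrR⟩ := ENNReal.lt_iff_exists_nnreal_btwn.1 hp.r_pos
  refine ⟨r, by exact_mod_cast hr0, fun z x hx hz => ?_⟩
  have h1 : (‖z - a‖₊ : ENNReal) + (x.toNNReal : ENNReal) < R := by
    refine lt_of_le_of_lt ?_ hrR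
    rw [← ENNReal.coe_add, ENNReal.coe_le_coe, ← NNReal.coe_le_coe]
    simp [Real.coe_toNNReal x hx]
    linarith
  have h2 := hp.changeOrigin (y := z - a) (lt_of_le_of_lt le_self_add h1)
  rw [add_sub_cancel] at h2
  have h3 := h2.analyticAt.hasFPowerSeriesAt.eq_formalMultilinearSeries h2.hasFPowerSeriesAt
  have h4 : (x.toNNReal : ENNReal) < (p.changeOrigin (z - a)).radius :=
    lt_of_lt_of_le (lt_tsub_iff_left.2 h1) h2.r_le
  have h5 := FormalMultilinearSeries.summable_norm_mul_pow _ h4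
  rw [← h3] at h5
  simpa [FormalMultilinearSeries.ofScalars_norm, Real.coe_toNNReal x hx, tcoef, abs_div] using h5

/-- Analytic continuation to the endpoint `a` by domination: if the Taylor coefficients of positive
order of `w` on `(b, a)` are bounded by those of a function analytic at `a`, then the Taylor series
of `w` at a centre close to `a` converges beyond `a`. -/
lemma extend_of_taylor_le {w S : ℝ → ℝ} {b a : ℝ} (hba : b < a)
    (hw : ∀ z ∈ Ioo b a, AnalyticAt ℝ w z) (hS : AnalyticAt ℝ S a)
    (hle : ∀ z ∈ Ioo b a, ∀ n ≥ 1, |tcoef w z n| ≤ |tcoef S z n|) :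
    ∃ W, AnalyticAt ℝ W a ∧ ∀ᶠ z in nhdsWithin a (Iio a), W z = w z := by
  obtain ⟨r, hr, hsum⟩ := taylor_summable hS
  obtain ⟨z₁, hz₁, hz₁a⟩ : ∃ z₁, max b (a - r / 4) < z₁ ∧ z₁ < a :=
    exists_between (max_lt hba (by linarith))
  obtain ⟨hb1, hr1⟩ := max_lt_iff.1 hz₁
  set p := FormalMultilinearSeries.ofScalars ℝ (tcoef w z₁) with hp
  have hs := hsum z₁ (r / 2) (by positivity) (by rw [abs_sub_comm, abs_of_pos] <;> linarith)
  have hrad : ((r / 2).toNNReal : ENNReal) ≤ p.radius := by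
    obtain ⟨C, hC⟩ := hs.tendsto_atTop_zero.bddAbove_range
    refine p.le_radius_of_eventually_le C ?_
    filter_upwards [eventually_ge_atTop 1] with n hn
    rw [hp, FormalMultilinearSeries.ofScalars_norm, Real.coe_toNNReal _ (by positivity)]
    refine le_trans ?_ (hC ⟨n, rfl⟩)
    exact mul_le_mul_of_nonneg_right (hle z₁ ⟨hb1, hz₁a⟩ n hn) (by positivity)
  have hradpos : 0 < p.radius := lt_of_lt_of_le (by simpa using hr) hrad
  have hWs : HasFPowerSeriesOnBall (fun z => p.sum (z - z₁)) p z₁ p.radius := by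
    simpa using (p.hasFPowerSeriesOnBall hradpos).comp_sub z₁
  have hWan : ∀ z ∈ Icc z₁ a, AnalyticAt ℝ (fun z => p.sum (z - z₁)) z := by
    intro z hz
    refine hWs.analyticAt_of_mem ?_
    refine lt_of_lt_of_le ?_ hrad
    rw [edist_dist, ENNReal.ofReal]
    rw [ENNReal.coe_lt_coe, Real.toNNReal_lt_toNNReal_iff (by positivity), Real.dist_eq,
      abs_of_nonneg] <;> linarith [hz.1, hz.2]
  refine ⟨fun z => p.sum (z - z₁), hWan a ⟨hz₁a.le, le_rfl⟩, ?_⟩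
  have heq : EqOn (fun z => p.sum (z - z₁)) w (Ico z₁ a) := by
    refine AnalyticOnNhd.eqOn_of_preconnected_of_eventuallyEq (𝕜 := ℝ) (z₀ := z₁)
      (fun z hz => hWan z ⟨hz.1, hz.2.le⟩)
      (fun z hz => hw z ⟨hb1.trans_le hz.1, hz.2⟩) isPreconnected_Ico ⟨le_rfl, hz₁a⟩ ?_
    have h1 := (hw z₁ ⟨hb1, hz₁a⟩).hasFPowerSeriesAt
    have h2 := hWs.hasFPowerSeriesAt
    rw [hasFPowerSeriesAt_iff'] at h1 h2
    filter_upwards [h1, h2] with z hz1 hz2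
    exact hz2.unique (by simpa [hp, tcoef] using hz1)
  filter_upwards [Ioo_mem_nhdsLT hz₁a] with z hz
  exact heq ⟨hz.1.le, hz.2⟩

/-- Analytic inverse function theorem at a point of positive derivative, together with the
fact that the local inverse preserves the left side of the point. -/
lemma exists_local_inverse {f : ℝ → ℝ} {a : ℝ} (hf : AnalyticAt ℝ f a) (hd : 0 < deriv f a) :
    ∃ φ : ℝ → ℝ, AnalyticAt ℝ φ (f a) ∧ φ (f a) = a ∧ (∀ᶠ y in nhds (f a), f (φ y) = y) ∧
      (∀ᶠ x in nhds a, φ (f x) = x) ∧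
      Tendsto φ (nhdsWithin (f a) (Iio (f a))) (nhdsWithin a (Iio a)) := by
  have hs := hf.hasStrictDerivAt
  have hφ := hf.analyticAt_localInverse hd.ne'
  set φ := hs.localInverse _ _ _ hd.ne' with hφd
  have hl : ∀ᶠ x in nhds a, φ (f x) = x := hs.eventually_left_inverse hd.ne'
  have ha : φ (f a) = a := hl.self_of_nhds
  have hr : ∀ᶠ y in nhds (f a), f (φ y) = y := hs.eventually_right_inverse hd.ne'
  refine ⟨φ, hφ, ha, hr, hl, ?_⟩
  have hdφ : HasDerivAt φ (deriv f a)⁻¹ (f a) := (hs.to_localInverse hd.ne').hasDerivAt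
  have hcont : Tendsto φ (nhdsWithin (f a) (Iio (f a))) (nhds a) := by
    have := hφ.continuousAt.tendsto
    rw [ha] at this
    exact this.mono_left nhdsWithin_le_nhds
  refine tendsto_nhdsWithin_iff.2 ⟨hcont, ?_⟩
  have h := hdφ.tendsto_slope
  have h2 := h.eventually (lt_mem_nhds (inv_pos.2 hd))
  have h3 : ∀ᶠ y in nhdsWithin (f a) (Iio (f a)), 0 < slope φ (f a) y :=
    h2.filter_mono (nhdsWithin_mono _ (fun y hy => ne_of_lt hy))
  filter_upwards [h3, self_mem_nhdsWithin] with y hy hya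
  rw [slope_def_field, ha] at hy
  by_contra hcon
  have : φ y - a ≥ 0 := by simpa using hcon
  have h5 : y - f a < 0 := sub_neg.2 hya
  exact absurd hy (not_lt.2 (div_nonpos_of_nonneg_of_nonpos this h5.le))

/-! ### The Stieltjes transform left of the support and Pringsheim's theorem -/

lemma msupp_eq (μ : Measure ℝ) : msupp μ = μ.support := by
  ext x
  simp [msupp, Measure.mem_support_iff_forall, pos_iff_ne_zero]

lemma ae_mem_msupp {μ : Measure ℝ} : ∀ᵐ l ∂μ, l ∈ msupp μ := by
  rw [msupp_eq]; exact Measure.support_mem_ae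

/-- The moments `∫ (l - z)⁻⁽ⁿ⁺¹⁾ dμ(l)`, which are the Taylor coefficients of `Gst μ` at `z`. -/
noncomputable def Mst (μ : Measure ℝ) (n : ℕ) (z : ℝ) : ℝ := ∫ l, ((l - z)⁻¹) ^ (n + 1) ∂μ

lemma Mst_zero {μ : Measure ℝ} (z : ℝ) : Mst μ 0 z = Gst μ z := by simp [Mst, Gst]

section Edge
variable {μ : Measure ℝ} [IsProbabilityMeasure μ]

lemma msupp_bdd (hc : HasCompactSupp μ) : ∃ K : Set ℝ, IsCompact K ∧ msupp μ ⊆ K := by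
  obtain ⟨K, hK, h1⟩ := hc
  refine ⟨K, hK, ?_⟩
  rw [msupp_eq]
  exact Measure.support_subset_of_isClosed hK.isClosed
    ((mem_ae_iff_prob_eq_one hK.isClosed.measurableSet).2 h1)

lemma msupp_nonempty : (msupp μ).Nonempty := by
  rw [msupp_eq]; exact Measure.nonempty_support (IsProbabilityMeasure.ne_zero μ)

lemma aInf_ae_le (hc : HasCompactSupp μ) : ∀ᵐ l ∂μ, aInf μ ≤ l := by
  obtain ⟨K, hK, hs⟩ := msupp_bdd hc
  filter_upwards [ae_mem_msupp] with l hl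
  exact csInf_le (hK.bddBelow.mono hs) hl

lemma ae_le_bSup (hc : HasCompactSupp μ) : ∀ᵐ l ∂μ, l ≤ bSup μ := by
  obtain ⟨K, hK, hs⟩ := msupp_bdd hc
  filter_upwards [ae_mem_msupp] with l hl
  exact le_csSup (hK.bddAbove.mono hs) hl

lemma measureReal_Iic_pos {c : ℝ} (h : aInf μ < c) : 0 < μ.real (Iic c) := by
  obtain ⟨x, hx, hxc⟩ := exists_lt_of_csInf_lt msupp_nonempty h
  exact ENNReal.toReal_pos (hx _ (Iic_mem_nhds hxc)) (measure_ne_top _ _)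

lemma Mst_ae_pos (hc : HasCompactSupp μ) {z : ℝ} (hz : z < aInf μ) :
    ∀ᵐ l ∂μ, 0 < (l - z)⁻¹ ∧ (l - z)⁻¹ ≤ (aInf μ - z)⁻¹ := by
  filter_upwards [aInf_ae_le hc] with l hl
  exact ⟨inv_pos.2 (by linarith), inv_anti₀ (by linarith) (by linarith)⟩

lemma integrable_pow (hc : HasCompactSupp μ) {z : ℝ} (hz : z < aInf μ) (n : ℕ) :
    Integrable (fun l => ((l - z)⁻¹) ^ n) μ := by
  refine Integrable.of_bound (by fun_prop) (((aInf μ - z)⁻¹) ^ n) ?_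
  filter_upwards [Mst_ae_pos hc hz] with l hl
  rw [Real.norm_of_nonneg (by have := hl.1; positivity)]
  exact pow_le_pow_left₀ hl.1.le hl.2 _

lemma integral_pos_of_ae {f : ℝ → ℝ} (hf : Integrable f μ) (h : ∀ᵐ l ∂μ, 0 < f l) :
    0 < ∫ l, f l ∂μ := by
  refine (integral_pos_iff_support_of_nonneg_ae (h.mono fun _ h => h.le) hf).2 ?_
  have : ∀ᵐ l ∂μ, l ∈ Function.support f := h.mono fun _ h => h.ne'
  rw [pos_iff_ne_zero]
  intro h0
  have h2 := measure_eq_zero_iff_ae_notMem.1 h0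
  obtain ⟨l, h3, h4⟩ := (this.and h2).exists
  exact h4 h3

lemma Mst_pos (hc : HasCompactSupp μ) {z : ℝ} (hz : z < aInf μ) (n : ℕ) : 0 < Mst μ n z :=
  integral_pos_of_ae (integrable_pow hc hz _)
    ((Mst_ae_pos hc hz).mono fun _ h => pow_pos h.1 _)

lemma Gst_hasSum (hc : HasCompactSupp μ) {z y : ℝ} (hy : |y| < aInf μ - z) :
    HasSum (fun n => Mst μ n z * y ^ n) (Gst μ (z + y)) := by
  have hz : z < aInf μ := by linarith [abs_nonneg y]
  set d := aInf μ - z with hd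
  have hd0 : 0 < d := by linarith
  have hq : |y| / d < 1 := (div_lt_one hd0).2 hy
  have key := hasSum_integral_of_dominated_convergence (μ := μ)
    (F := fun n l => ((l - z)⁻¹) ^ (n + 1) * y ^ n) (f := fun l => (l - (z + y))⁻¹)
    (fun n _ => d⁻¹ * (|y| / d) ^ n) (fun n => by fun_prop) ?_ ?_ ?_ ?_
  · simpa only [integral_mul_const, Mst, Gst] using key
  · intro n
    filter_upwards [Mst_ae_pos hc hz] with l hl
    rw [norm_mul, norm_pow, norm_pow, Real.norm_eq_abs, Real.norm_eq_abs, abs_of_pos hl.1]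
    calc ((l - z)⁻¹) ^ (n + 1) * |y| ^ n ≤ (d⁻¹) ^ (n + 1) * |y| ^ n := by
          exact mul_le_mul_of_nonneg_right (pow_le_pow_left₀ hl.1.le hl.2 _) (by positivity)
      _ = _ := by rw [div_eq_mul_inv, mul_pow, pow_succ]; ring
  · exact ae_of_all _ fun _ => (summable_geometric_of_lt_one (by positivity) hq).mul_left _
  · exact integrable_const _
  · filter_upwards [aInf_ae_le hc] with l hl
    have hlz : 0 < l - z := by linarith
    have h1 : |(l - z)⁻¹ * y| < 1 := by
      rw [abs_mul, abs_of_pos (inv_pos.2 hlz), inv_mul_lt_one₀ hlz]; linarith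
    have h2 := (hasSum_geometric_of_abs_lt_one h1).mul_left (l - z)⁻¹
    have hne : l - (z + y) ≠ 0 := by linarith [le_abs_self y]
    have hne2 : 1 - (l - z)⁻¹ * y ≠ 0 := by linarith [le_abs_self ((l - z)⁻¹ * y)]
    convert! h2 using 1
    · ext n; rw [mul_pow, pow_succ]; ring
    · rw [← mul_inv]; congr 1; field_simp; ring

lemma Gst_hasFPowerSeriesAt (hc : HasCompactSupp μ) {z : ℝ} (hz : z < aInf μ) :
    HasFPowerSeriesAt (Gst μ) (FormalMultilinearSeries.ofScalars ℝ (fun n => Mst μ n z)) z := by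
  rw [hasFPowerSeriesAt_iff]
  have : ∀ᶠ y : ℝ in nhds 0, |y| < aInf μ - z := by
    have := continuous_abs.continuousAt (x := (0:ℝ))
    exact this.eventually (gt_mem_nhds (by simpa using hz))
  filter_upwards [this] with y hy
  simpa [mul_comm] using Gst_hasSum hc hy

lemma Gst_analyticAt (hc : HasCompactSupp μ) {z : ℝ} (hz : z < aInf μ) :
    AnalyticAt ℝ (Gst μ) z := ⟨_, Gst_hasFPowerSeriesAt hc hz⟩

lemma tcoef_Gst (hc : HasCompactSupp μ) {z : ℝ} (hz : z < aInf μ) (n : ℕ) :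
    tcoef (Gst μ) z n = Mst μ n z := by
  have h := (Gst_analyticAt hc hz).hasFPowerSeriesAt.eq_formalMultilinearSeries
    (Gst_hasFPowerSeriesAt hc hz)
  have := congrArg (fun p => FormalMultilinearSeries.coeff p n) h
  simpa [tcoef] using this

lemma deriv_Gst (hc : HasCompactSupp μ) {z : ℝ} (hz : z < aInf μ) :
    deriv (Gst μ) z = Mst μ 1 z := by
  simpa [tcoef] using tcoef_Gst hc hz 1

lemma Gst_pos (hc : HasCompactSupp μ) {z : ℝ} (hz : z < aInf μ) : 0 < Gst μ z :=
  Mst_zero (μ := μ) z ▸ Mst_pos hc hz 0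

lemma Gst_neg (hc : HasCompactSupp μ) {z : ℝ} (hz : bSup μ < z) : Gst μ z < 0 := by
  have hb : ∀ᵐ l ∂μ, 0 < -(l - z)⁻¹ ∧ -(l - z)⁻¹ ≤ (z - bSup μ)⁻¹ := by
    filter_upwards [ae_le_bSup hc] with l hl
    rw [← inv_neg, neg_sub]
    exact ⟨inv_pos.2 (by linarith), inv_anti₀ (by linarith) (by linarith)⟩
  have hi : Integrable (fun l => -(l - z)⁻¹) μ := by
    refine Integrable.of_bound (by fun_prop) ((z - bSup μ)⁻¹) ?_
    filter_upwards [hb] with l hl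
    rw [Real.norm_of_nonneg hl.1.le]; exact hl.2
  have := integral_pos_of_ae hi (hb.mono fun _ h => h.1)
  rw [integral_neg] at this
  simpa [Gst] using this

lemma Gst_strictMonoOn (hc : HasCompactSupp μ) : StrictMonoOn (Gst μ) (Iio (aInf μ)) := by
  refine strictMonoOn_of_deriv_pos (convex_Iio _)
    (fun z hz => (Gst_analyticAt hc hz).continuousAt.continuousWithinAt) ?_
  intro z hz
  rw [interior_Iio] at hz
  rw [deriv_Gst hc hz]
  exact Mst_pos hc hz 1

lemma Gst_le (hc : HasCompactSupp μ) {z : ℝ} (hz : z < aInf μ) : Gst μ z ≤ (aInf μ - z)⁻¹ := by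
  have h := integral_mono_ae (μ := μ) (by simpa using integrable_pow hc hz 1)
    (integrable_const ((aInf μ - z)⁻¹)) ((Mst_ae_pos hc hz).mono fun _ h => h.2)
  simpa [Gst] using h

lemma Gst_tendsto_atBot (hc : HasCompactSupp μ) : Tendsto (Gst μ) atBot (nhds 0) := by
  have h : Tendsto (fun z => (aInf μ - z)⁻¹) atBot (nhds 0) :=
    tendsto_inv_atTop_zero.comp (tendsto_atTop_add_const_left _ _ tendsto_neg_atBot_atTop)
  refine tendsto_of_tendsto_of_tendsto_of_le_of_le' tendsto_const_nhds h ?_ ?_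
  · filter_upwards [Iio_mem_atBot (aInf μ)] with z hz using (Gst_pos hc hz).le
  · filter_upwards [Iio_mem_atBot (aInf μ)] with z hz using Gst_le hc hz

/-- Pringsheim's theorem for Stieltjes transforms: `Gst μ` has no analytic continuation past the
left edge of the support. -/
lemma no_analytic_extension (hc : HasCompactSupp μ) {f : ℝ → ℝ}
    (hf : AnalyticAt ℝ f (aInf μ))
    (h : ∀ᶠ z in nhdsWithin (aInf μ) (Iio (aInf μ)), f z = Gst μ z) : False := by
  obtain ⟨r, hr, hsum⟩ := taylor_summable hf
  set a := aInf μ with ha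
  obtain ⟨b, hba, hb⟩ := (mem_nhdsLT_iff_exists_Ioo_subset).1 h
  obtain ⟨z, hz, hza⟩ : ∃ z, max b (a - r / 4) < z ∧ z < a :=
    exists_between (max_lt hba (by linarith))
  obtain ⟨hb1, hr1⟩ := max_lt_iff.1 hz
  have hs := hsum z (r / 2) (by positivity) (by rw [abs_sub_comm, abs_of_pos] <;> linarith)
  have hev : f =ᶠ[nhds z] Gst μ := by
    filter_upwards [Ioo_mem_nhds hb1 hza] with w hw using hb hw
  have hco : ∀ n, tcoef f z n = Mst μ n z := fun n => by
    rw [← tcoef_Gst hc hza, tcoef, tcoef, hev.iteratedDeriv_eq]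
  set m := μ.real (Iic (a + r / 8)) with hm
  have hm0 : 0 < m := measureReal_Iic_pos (by linarith)
  -- the positive mass `m` lies within `3 * r / 8` of `z`
  have hlow : ∀ n, m * ((3 * r / 8)⁻¹) ^ (n + 1) ≤ Mst μ n z := by
    intro n
    have h1 : ∫ l in Iic (a + r / 8), ((l - z)⁻¹) ^ (n + 1) ∂μ ≤ Mst μ n z :=
      setIntegral_le_integral (integrable_pow hc hza _)
        ((Mst_ae_pos hc hza).mono fun l hl => pow_nonneg hl.1.le _)
    refine le_trans ?_ h1
    rw [← smul_eq_mul, hm, ← setIntegral_const]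
    refine setIntegral_mono_on_ae (integrable_const _).integrableOn
      (integrable_pow hc hza _).integrableOn measurableSet_Iic ?_
    filter_upwards [aInf_ae_le hc] with l hl hl2
    have h3 : l ≤ a + r / 8 := hl2
    have : 0 < l - z := by linarith
    gcongr
    linarith
  -- hence the terms of the convergent series `hs` do not tend to `0`
  have hlow2 : ∀ n, m * (3 * r / 8)⁻¹ ≤ |tcoef f z n| * (r / 2) ^ n := by
    intro n
    rw [hco, abs_of_pos (Mst_pos hc hza n)]
    calc m * (3 * r / 8)⁻¹ ≤ m * (3 * r / 8)⁻¹ * (4 / 3 : ℝ) ^ n := by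
          refine le_mul_of_one_le_right (by positivity) (one_le_pow₀ (by norm_num))
      _ = m * ((3 * r / 8)⁻¹) ^ (n + 1) * (r / 2) ^ n := by
          rw [pow_succ, show (4 / 3 : ℝ) = (3 * r / 8)⁻¹ * (r / 2) by field_simp; norm_num, mul_pow]
          ring
      _ ≤ _ := by gcongr; exact hlow n
  have := ge_of_tendsto' hs.tendsto_atTop_zero hlow2
  have : 0 < m * (3 * r / 8)⁻¹ := by positivity
  linarith

/-- A consequence of Pringsheim's theorem: if `Gst μ ∘ Ω` is, left of `x`, the restriction of a
function analytic at `x`, where `Ω` is analytic with positive derivative at `x`, then `Ω x` is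
not the left edge of the support. -/
lemma no_analytic_extension_comp (hc : HasCompactSupp μ) {Ω g : ℝ → ℝ} {x : ℝ}
    (hΩ : AnalyticAt ℝ Ω x) (hd : 0 < deriv Ω x) (hg : AnalyticAt ℝ g x)
    (h : ∀ᶠ z in nhdsWithin x (Iio x), Gst μ (Ω z) = g z) : Ω x ≠ aInf μ := by
  intro hx
  obtain ⟨φ, hφ, hφx, hr, -, ht⟩ := exists_local_inverse hΩ hd
  rw [hx] at hφ hφx hr ht
  refine no_analytic_extension hc (f := g ∘ φ) (AnalyticAt.comp (by rwa [hφx]) hφ) ?_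
  filter_upwards [ht.eventually h, hr.filter_mono nhdsWithin_le_nhds] with w h1 h2
  rw [Function.comp_apply, ← h1, h2]

end Edge

/-! ### Kaluza's theorem and the reciprocal of the Stieltjes transform -/

/-- Kaluza's theorem: the reciprocal of a power series with positive log-convex coefficients has
nonpositive coefficients, apart from the constant one. -/
lemma kaluza {a b : ℕ → ℝ} (ha : ∀ n, 0 < a n) (hlc : ∀ n, a (n + 1) ^ 2 ≤ a n * a (n + 2))
    (hb0 : 0 < b 0) (hab : ∀ n ≥ 1, ∑ i ∈ Finset.range (n + 1), b i * a (n - i) = 0) :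
    ∀ n ≥ 1, b n ≤ 0 := by
  have hq : Monotone fun n => a (n + 1) / a n := by
    refine monotone_nat_of_le_succ fun n => ?_
    rw [div_le_div_iff₀ (ha _) (ha _)]
    linarith [hlc n]
  intro n
  induction n using Nat.strong_induction_on with
  | _ n ih =>
    intro hn
    obtain ⟨n, rfl⟩ : ∃ m, n = m + 1 := ⟨n - 1, by omega⟩
    have h1 := hab (n + 1) hn
    rw [Finset.sum_range_succ, Nat.sub_self] at h1
    suffices h : 0 ≤ ∑ i ∈ Finset.range (n + 1), b i * a (n + 1 - i) by
      have h2 : b (n + 1) * a 0 ≤ 0 := by linarith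
      exact nonpos_of_mul_nonpos_left h2 (ha 0)
    rcases Nat.eq_zero_or_pos n with rfl | hn0
    · simpa using (mul_pos hb0 (ha 1)).le
    · have h0 := hab n hn0
      have h3 : ∑ i ∈ Finset.range (n + 1), b i * a (n + 1 - i) =
          ∑ i ∈ Finset.range (n + 1), b i * (a (n + 1 - i) - a (n + 1) / a n * a (n - i)) := by
        simp only [mul_sub, Finset.sum_sub_distrib]
        have : ∑ i ∈ Finset.range (n + 1), b i * (a (n + 1) / a n * a (n - i)) = 0 := by
          rw [← mul_zero (a (n + 1) / a n), ← h0, Finset.mul_sum]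
          exact Finset.sum_congr rfl fun i _ => by ring
        rw [this, sub_zero]
      rw [h3]
      refine Finset.sum_nonneg fun i hi => ?_
      have hi' : i ≤ n := by simpa [Nat.lt_succ_iff] using hi
      rcases Nat.eq_zero_or_pos i with rfl | hi0
      · have := (ha n).ne'
        simp [this]
      · refine mul_nonneg_of_nonpos_of_nonpos (ih i (by omega) hi0) ?_
        have h5 := hq (show n - i ≤ n by omega)
        simp only at h5
        rw [div_le_iff₀ (ha _), show n - i + 1 = n + 1 - i by omega] at h5
        linarith

/-- `-1/G_μ(w) - w`. For `μ` with compact support this is a Nevanlinna function; here only the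
signs of its derivatives left of the support are used. -/
noncomputable def Hst (μ : Measure ℝ) (w : ℝ) : ℝ := -(Gst μ w)⁻¹ - w

section Edge
variable {μ : Measure ℝ} [IsProbabilityMeasure μ]

/-- Log-convexity of the moments, by the Cauchy-Schwarz inequality. -/
lemma Mst_logconvex (hc : HasCompactSupp μ) {z : ℝ} (hz : z < aInf μ) (n : ℕ) :
    Mst μ (n + 1) z ^ 2 ≤ Mst μ n z * Mst μ (n + 2) z := by
  have hi := integrable_pow hc hz
  have h : 0 ≤ ∫ l, ((l - z)⁻¹) ^ (n + 1) * (Mst μ (n + 1) z - Mst μ n z * (l - z)⁻¹) ^ 2 ∂μ :=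
    integral_nonneg_of_ae ((Mst_ae_pos hc hz).mono fun l hl =>
      mul_nonneg (pow_nonneg hl.1.le _) (sq_nonneg _))
  have h2 : ∫ l, ((l - z)⁻¹) ^ (n + 1) * (Mst μ (n + 1) z - Mst μ n z * (l - z)⁻¹) ^ 2 ∂μ =
      Mst μ (n + 1) z ^ 2 * Mst μ n z - 2 * Mst μ (n + 1) z * Mst μ n z * Mst μ (n + 1) z
        + Mst μ n z ^ 2 * Mst μ (n + 2) z := by
    have he : ∀ l : ℝ, ((l - z)⁻¹) ^ (n + 1) * (Mst μ (n + 1) z - Mst μ n z * (l - z)⁻¹) ^ 2 =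
        Mst μ (n + 1) z ^ 2 * ((l - z)⁻¹) ^ (n + 1)
        - 2 * Mst μ (n + 1) z * Mst μ n z * ((l - z)⁻¹) ^ (n + 1 + 1)
        + Mst μ n z ^ 2 * ((l - z)⁻¹) ^ (n + 2 + 1) := fun l => by ring
    simp_rw [he]
    rw [integral_add (((hi _).const_mul _).sub' ((hi _).const_mul _)) ((hi _).const_mul _),
      integral_sub ((hi _).const_mul _) ((hi _).const_mul _)]
    simp only [integral_const_mul]
    rfl
  rw [h2] at h
  have hp := Mst_pos hc hz n
  nlinarith

lemma Mst_zero_sq_le (hc : HasCompactSupp μ) {z : ℝ} (hz : z < aInf μ) :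
    Gst μ z ^ 2 ≤ Mst μ 1 z := by
  have hi := integrable_pow hc hz
  have h : 0 ≤ ∫ l, ((l - z)⁻¹ - Gst μ z) ^ 2 ∂μ := integral_nonneg fun l => sq_nonneg _
  have h2 : ∫ l, ((l - z)⁻¹ - Gst μ z) ^ 2 ∂μ =
      Mst μ 1 z - 2 * Gst μ z * Gst μ z + Gst μ z ^ 2 := by
    have he : ∀ l : ℝ, ((l - z)⁻¹ - Gst μ z) ^ 2 =
        ((l - z)⁻¹) ^ (1 + 1) - 2 * Gst μ z * ((l - z)⁻¹) ^ 1 + Gst μ z ^ 2 := fun l => by ring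
    simp_rw [he]
    rw [integral_add ((hi _).sub' ((hi _).const_mul _)) (integrable_const _),
      integral_sub (hi _) ((hi _).const_mul _)]
    simp only [integral_const_mul]
    simp [Mst, Gst]
  rw [h2] at h
  nlinarith

lemma Gst_inv_analyticAt (hc : HasCompactSupp μ) {z : ℝ} (hz : z < aInf μ) :
    AnalyticAt ℝ (fun w => (Gst μ w)⁻¹) z := (Gst_analyticAt hc hz).fun_inv (Gst_pos hc hz).ne'

lemma Hst_analyticAt (hc : HasCompactSupp μ) {z : ℝ} (hz : z < aInf μ) :
    AnalyticAt ℝ (Hst μ) z := (Gst_inv_analyticAt hc hz).fun_neg.fun_sub analyticAt_id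

lemma tcoef_Gst_inv_nonpos (hc : HasCompactSupp μ) {z : ℝ} (hz : z < aInf μ) :
    ∀ n ≥ 1, tcoef (fun w => (Gst μ w)⁻¹) z n ≤ 0 := by
  refine kaluza (a := fun n => Mst μ n z) (fun n => Mst_pos hc hz n)
    (Mst_logconvex hc hz) (by simpa [tcoef] using Gst_pos hc hz) ?_
  intro n hn
  have h1 := iteratedDeriv_mul (n := n) (Gst_inv_analyticAt hc hz).contDiffAt
    (Gst_analyticAt hc hz).contDiffAt
  have h2 : ((fun w => (Gst μ w)⁻¹) * Gst μ) =ᶠ[nhds z] fun _ => (1 : ℝ) := by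
    filter_upwards [Iio_mem_nhds hz] with w hw
    simp [(Gst_pos hc hw).ne']
  rw [h2.iteratedDeriv_eq, iteratedDeriv_const, if_neg (by omega)] at h1
  have h3 : ∑ i ∈ Finset.range (n + 1), tcoef (fun w => (Gst μ w)⁻¹) z i * Mst μ (n - i) z =
      (n.factorial : ℝ)⁻¹ * ∑ i ∈ Finset.range (n + 1), (n.choose i : ℝ) *
        iteratedDeriv i (fun w => (Gst μ w)⁻¹) z * iteratedDeriv (n - i) (Gst μ) z := by
    rw [Finset.mul_sum]
    refine Finset.sum_congr rfl fun i hi => ?_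
    have hi' : i ≤ n := by simpa [Nat.lt_succ_iff] using hi
    rw [← tcoef_Gst hc hz, tcoef, tcoef, Nat.cast_choose ℝ hi']
    have := Nat.factorial_ne_zero n
    field_simp
  rw [h3, ← h1, mul_zero]

lemma iteratedDeriv_Hst_nonneg (hc : HasCompactSupp μ) {z : ℝ} (hz : z < aInf μ) (k : ℕ) :
    0 ≤ iteratedDeriv (k + 1) (Hst μ) z := by
  rcases Nat.eq_zero_or_pos k with rfl | hk
  · have hG := Gst_pos hc hz
    have h1 := (((Gst_analyticAt hc hz).differentiableAt.hasDerivAt.fun_inv hG.ne').fun_neg.fun_sub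
      (hasDerivAt_id' z)).deriv
    have h2 : iteratedDeriv (0 + 1) (Hst μ) z = -(-deriv (Gst μ) z / Gst μ z ^ 2) - 1 := by
      rw [zero_add, iteratedDeriv_one]; exact h1
    rw [h2, deriv_Gst hc hz, neg_div, neg_neg, sub_nonneg, le_div_iff₀ (by positivity), one_mul]
    exact Mst_zero_sq_le hc hz
  · have h1 := tcoef_Gst_inv_nonpos hc hz (k + 1) (by omega)
    have h2 : iteratedDeriv (k + 1) (fun w => (Gst μ w)⁻¹) z ≤ 0 := by
      by_contra hcon
      exact absurd h1 (not_le.2 (div_pos (not_le.1 hcon) (by positivity)))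
    have h3 : iteratedDeriv (k + 1) (Hst μ) z =
        -iteratedDeriv (k + 1) (fun w => (Gst μ w)⁻¹) z - iteratedDeriv (k + 1) (fun w => w) z := by
      rw [← iteratedDeriv_fun_neg]
      exact iteratedDeriv_fun_sub (Gst_inv_analyticAt hc hz).fun_neg.contDiffAt contDiffAt_id
    rw [h3, iteratedDeriv_fun_id, if_neg (by omega), if_neg (by omega)]
    linarith

lemma Ginv_Gst (hc : HasCompactSupp μ) {z : ℝ} (hz : z < aInf μ) : Ginv μ (Gst μ z) = z := by
  have hex : ∃ w ∈ Iio (aInf μ) ∪ Ioi (bSup μ), Gst μ w = Gst μ z := ⟨z, Or.inl hz, rfl⟩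
  have h1 := Function.invFunOn_mem hex
  have h2 := Function.invFunOn_eq hex
  change Ginv μ (Gst μ z) ∈ _ at h1
  change Gst μ (Ginv μ (Gst μ z)) = _ at h2
  rcases h1 with h1 | h1
  · exact (Gst_strictMonoOn hc).injOn h1 hz h2
  · have h3 := Gst_neg hc h1
    have h4 := Gst_pos hc hz
    linarith

lemma Ginv_analyticAt (hc : HasCompactSupp μ) {z : ℝ} (hz : z < aInf μ) :
    AnalyticAt ℝ (Ginv μ) (Gst μ z) ∧ HasDerivAt (Ginv μ) (Mst μ 1 z)⁻¹ (Gst μ z) := by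
  have hG := Gst_analyticAt hc hz
  have hd : 0 < deriv (Gst μ) z := by rw [deriv_Gst hc hz]; exact Mst_pos hc hz 1
  obtain ⟨φ, hφ, hφz, hr, -, -⟩ := exists_local_inverse hG hd
  have hlt : ∀ᶠ g in nhds (Gst μ z), φ g < aInf μ :=
    hφ.continuousAt.eventually (gt_mem_nhds (by rwa [hφz]))
  have heq : φ =ᶠ[nhds (Gst μ z)] Ginv μ := by
    filter_upwards [hr, hlt] with g h1 h2
    conv_rhs => rw [← h1]
    exact (Ginv_Gst hc h2).symm
  refine ⟨hφ.congr heq, ?_⟩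
  rw [← deriv_Gst hc hz]
  refine (hG.hasStrictDerivAt.to_local_left_inverse hd.ne' ?_).hasDerivAt
  filter_upwards [Iio_mem_nhds hz] with w hw using Ginv_Gst hc hw

lemma Gst_lt_GaSup (hc : HasCompactSupp μ) {z : ℝ} (hz : z < aInf μ) :
    (Gst μ z : EReal) < GaSup μ := by
  obtain ⟨w, h1, h2⟩ := exists_between hz
  refine lt_of_lt_of_le (EReal.coe_lt_coe_iff.2 (Gst_strictMonoOn hc hz h2 h1)) ?_
  exact le_sSup ⟨w, h2, rfl⟩

/-- The values below a value of `Gst μ` left of the support are attained there. -/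
lemma exists_Gst_eq (hc : HasCompactSupp μ) {z g : ℝ} (hz : z < aInf μ) (hg : 0 < g)
    (h : g ≤ Gst μ z) : ∃ w < aInf μ, Gst μ w = g := by
  obtain ⟨y, hy, hyz⟩ := (((Gst_tendsto_atBot hc).eventually (gt_mem_nhds hg)).and
    (Iic_mem_atBot z)).exists
  have hcont : ContinuousOn (Gst μ) (Icc y z) := fun w hw =>
    (Gst_analyticAt hc (hw.2.trans_lt hz)).continuousAt.continuousWithinAt
  obtain ⟨w, hw, hwg⟩ := intermediate_value_Icc hyz hcont ⟨hy.le, h⟩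
  exact ⟨w, hw.2.trans_lt hz, hwg⟩

lemma neg_mem_Dhat (hc : HasCompactSupp μ) {g : ℝ} (hg : 0 < g) :
    -g ∈ Dhat μ ↔ ∃ z < aInf μ, Gst μ z = g := by
  constructor
  · rintro ⟨h1, -⟩
    rw [EReal.coe_neg, EReal.neg_lt_neg_iff] at h1
    obtain ⟨_, ⟨z, hz, rfl⟩, h2⟩ := lt_sSup_iff.1 h1
    exact exists_Gst_eq hc hz hg (EReal.coe_le_coe_iff.1 h2.le)
  · rintro ⟨z, hz, rfl⟩
    refine ⟨?_, ?_⟩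
    · rw [EReal.coe_neg, EReal.neg_lt_neg_iff]; exact Gst_lt_GaSup hc hz
    · rw [EReal.coe_neg, EReal.neg_lt_neg_iff]
      refine lt_of_le_of_lt (sInf_le ⟨bSup μ + 1, by simp, rfl⟩) ?_
      refine EReal.coe_lt_coe_iff.2 ((Gst_neg hc (by simp)).trans hg)

lemma Gst_tendsto_GaSup (hc : HasCompactSupp μ) :
    Tendsto (fun z => (Gst μ z : EReal)) (nhdsWithin (aInf μ) (Iio (aInf μ)))
      (nhds (GaSup μ)) := by
  refine MonotoneOn.tendsto_nhdsLT (fun x hx y hy hxy => ?_) (OrderTop.bddAbove _)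
  exact EReal.coe_le_coe_iff.2 ((Gst_strictMonoOn hc).monotoneOn hx hy hxy)

end Edge

/-! ### Nonnegative derivatives of solutions of the subordination equations -/

/-- The semiring of functions generated by two sequences `A`, `B` and a function `D`. In
`iteratedDeriv_nonneg_of_coupled` it is closed under differentiation, so that nonnegativity of the
generators propagates to all higher derivatives. -/
inductive PosAlg (A B : ℕ → ℝ → ℝ) (D : ℝ → ℝ) : (ℝ → ℝ) → Prop
  | zero : PosAlg A B D fun _ => 0
  | one : PosAlg A B D fun _ => 1
  | genA (k : ℕ) : PosAlg A B D (A k)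
  | genB (k : ℕ) : PosAlg A B D (B k)
  | genD : PosAlg A B D D
  | add {f g : ℝ → ℝ} : PosAlg A B D f → PosAlg A B D g → PosAlg A B D fun z => f z + g z
  | mul {f g : ℝ → ℝ} : PosAlg A B D f → PosAlg A B D g → PosAlg A B D fun z => f z * g z

lemma PosAlg.nonneg {A B : ℕ → ℝ → ℝ} {D f : ℝ → ℝ} (hf : PosAlg A B D f) {z : ℝ}
    (hA : ∀ k, 0 ≤ A k z) (hB : ∀ k, 0 ≤ B k z) (hD : 0 ≤ D z) : 0 ≤ f z := by
  induction hf with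
  | zero => exact le_rfl
  | one => exact zero_le_one
  | genA k => exact hA k
  | genB k => exact hB k
  | genD => exact hD
  | add _ _ h1 h2 => exact add_nonneg h1 h2
  | mul _ _ h1 h2 => exact mul_nonneg h1 h2

lemma PosAlg.exists_deriv {A B : ℕ → ℝ → ℝ} {D : ℝ → ℝ} {s : Set ℝ}
    (hA : ∀ k, ∃ g, PosAlg A B D g ∧ ∀ z ∈ s, HasDerivAt (A k) (g z) z)
    (hB : ∀ k, ∃ g, PosAlg A B D g ∧ ∀ z ∈ s, HasDerivAt (B k) (g z) z)
    (hD : ∃ g, PosAlg A B D g ∧ ∀ z ∈ s, HasDerivAt D (g z) z)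
    {f : ℝ → ℝ} (hf : PosAlg A B D f) :
    ∃ g, PosAlg A B D g ∧ ∀ z ∈ s, HasDerivAt f (g z) z := by
  induction hf with
  | zero => exact ⟨_, .zero, fun z _ => hasDerivAt_const z 0⟩
  | one => exact ⟨_, .zero, fun z _ => hasDerivAt_const z 1⟩
  | genA k => exact hA k
  | genB k => exact hB k
  | genD => exact hD
  | add _ _ h1 h2 =>
    obtain ⟨g1, h1, h1'⟩ := h1
    obtain ⟨g2, h2, h2'⟩ := h2
    exact ⟨_, h1.add h2, fun z hz => (h1' z hz).fun_add (h2' z hz)⟩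
  | mul a b h1 h2 =>
    obtain ⟨g1, h1, h1'⟩ := h1
    obtain ⟨g2, h2, h2'⟩ := h2
    exact ⟨_, (h1.mul b).add (a.mul h2), fun z hz => (h1' z hz).fun_mul (h2' z hz)⟩

lemma PosAlg.exists_iteratedDeriv {A B : ℕ → ℝ → ℝ} {D : ℝ → ℝ} {s : Set ℝ} (hs : IsOpen s)
    (hcl : ∀ f, PosAlg A B D f → ∃ g, PosAlg A B D g ∧ ∀ z ∈ s, HasDerivAt f (g z) z)
    {f : ℝ → ℝ} (hf : PosAlg A B D f) (n : ℕ) :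
    ∃ g, PosAlg A B D g ∧ ∀ z ∈ s, iteratedDeriv n f z = g z := by
  induction n with
  | zero => exact ⟨f, hf, fun z _ => by simp⟩
  | succ n ih =>
    obtain ⟨g, hg, hg'⟩ := ih
    obtain ⟨g2, hg2, hg2'⟩ := hcl g hg
    refine ⟨g2, hg2, fun z hz => ?_⟩
    have h : iteratedDeriv n f =ᶠ[nhds z] g := by
      filter_upwards [hs.mem_nhds hz] with w hw using hg' w hw
    rw [iteratedDeriv_succ, h.deriv_eq, (hg2' z hz).deriv]

lemma iteratedDeriv_hasDerivAt {P : ℝ → ℝ} {x : ℝ} (hP : AnalyticAt ℝ P x) (k : ℕ) :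
    HasDerivAt (iteratedDeriv k P) (iteratedDeriv (k + 1) P x) x := by
  rw [iteratedDeriv_succ, iteratedDeriv_eq_iterate]
  exact (hP.iterated_deriv k).differentiableAt.hasDerivAt

/-- If `u' = 1 + P'(v) v'` and `v' = 1 + Q'(u) u'` with `u', v' > 0` and all derivatives of `P` and
`Q` nonnegative, then all derivatives of `u` and `v` are nonnegative: solving the linear system
gives `u' = (1 + P'(v)) D` and `v' = (1 + Q'(u)) D` with `D = (1 - P'(v) Q'(u))⁻¹ > 0`, and
differentiating these expressions never produces a minus sign. -/
lemma iteratedDeriv_nonneg_of_coupled {s : Set ℝ} (hs : IsOpen s) {P Q u v d1 d2 : ℝ → ℝ}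
    (hP : ∀ z ∈ s, AnalyticAt ℝ P (v z)) (hQ : ∀ z ∈ s, AnalyticAt ℝ Q (u z))
    (hP' : ∀ z ∈ s, ∀ k, 0 ≤ iteratedDeriv (k + 1) P (v z))
    (hQ' : ∀ z ∈ s, ∀ k, 0 ≤ iteratedDeriv (k + 1) Q (u z))
    (hu : ∀ z ∈ s, HasDerivAt u (d1 z) z) (hv : ∀ z ∈ s, HasDerivAt v (d2 z) z)
    (h1 : ∀ z ∈ s, d1 z = 1 + deriv P (v z) * d2 z)
    (h2 : ∀ z ∈ s, d2 z = 1 + deriv Q (u z) * d1 z)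
    (p1 : ∀ z ∈ s, 0 < d1 z) (n : ℕ) {z : ℝ} (hz : z ∈ s) :
    0 ≤ iteratedDeriv (n + 1) u z ∧ 0 ≤ iteratedDeriv (n + 1) v z := by
  let A : ℕ → ℝ → ℝ := fun k z => iteratedDeriv (k + 1) P (v z)
  let B : ℕ → ℝ → ℝ := fun k z => iteratedDeriv (k + 1) Q (u z)
  let D : ℝ → ℝ := fun z => (1 - A 0 z * B 0 z)⁻¹
  have hA0 : ∀ z, deriv P (v z) = A 0 z := fun z => by simp [A]
  have hB0 : ∀ z, deriv Q (u z) = B 0 z := fun z => by simp [B]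
  -- `d1 (1 - A₀ B₀) = 1 + A₀` with `d1 > 0`
  have hden : ∀ z ∈ s, 0 < 1 - A 0 z * B 0 z := fun z hz => by
    have e1 := h1 z hz
    have e2 := h2 z hz
    rw [hA0] at e1
    rw [hB0] at e2
    have e3 : d1 z * (1 - A 0 z * B 0 z) = 1 + A 0 z := by
      rw [e2] at e1; linear_combination e1
    have e4 : 0 ≤ A 0 z := hP' z hz 0
    exact pos_of_mul_pos_right (by rw [e3]; linarith) (p1 z hz).le
  have hd1 : ∀ z ∈ s, d1 z = (1 + A 0 z) * D z := fun z hz => by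
    have e1 := h1 z hz
    have e2 := h2 z hz
    rw [hA0] at e1
    rw [hB0] at e2
    rw [eq_mul_inv_iff_mul_eq₀ (hden z hz).ne']
    linear_combination e1 + A 0 z * e2
  have hd2 : ∀ z ∈ s, d2 z = (1 + B 0 z) * D z := fun z hz => by
    have e1 := h1 z hz
    have e2 := h2 z hz
    rw [hA0] at e1
    rw [hB0] at e2
    rw [eq_mul_inv_iff_mul_eq₀ (hden z hz).ne']
    linear_combination e2 + B 0 z * e1
  have hdu : PosAlg A B D fun z => (1 + A 0 z) * D z := (PosAlg.one.add (.genA 0)).mul .genD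
  have hdv : PosAlg A B D fun z => (1 + B 0 z) * D z := (PosAlg.one.add (.genB 0)).mul .genD
  have hAd : ∀ k, ∀ z ∈ s, HasDerivAt (A k) (A (k + 1) z * ((1 + B 0 z) * D z)) z :=
    fun k z hz => by
      have := (iteratedDeriv_hasDerivAt (hP z hz) (k + 1)).comp z (hv z hz)
      rwa [hd2 z hz] at this
  have hBd : ∀ k, ∀ z ∈ s, HasDerivAt (B k) (B (k + 1) z * ((1 + A 0 z) * D z)) z :=
    fun k z hz => by
      have := (iteratedDeriv_hasDerivAt (hQ z hz) (k + 1)).comp z (hu z hz)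
      rwa [hd1 z hz] at this
  have hA : ∀ k, ∃ g, PosAlg A B D g ∧ ∀ z ∈ s, HasDerivAt (A k) (g z) z :=
    fun k => ⟨_, (PosAlg.genA (k + 1)).mul hdv, hAd k⟩
  have hB : ∀ k, ∃ g, PosAlg A B D g ∧ ∀ z ∈ s, HasDerivAt (B k) (g z) z :=
    fun k => ⟨_, (PosAlg.genB (k + 1)).mul hdu, hBd k⟩
  have hD : ∃ g, PosAlg A B D g ∧ ∀ z ∈ s, HasDerivAt D (g z) z := by
    refine ⟨_, (PosAlg.genD.mul .genD).mul
      ((((PosAlg.genA 1).mul hdv).mul (.genB 0)).add ((PosAlg.genA 0).mul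
        ((PosAlg.genB 1).mul hdu))), fun z hz => ?_⟩
    refine ((((hAd 0 z hz).fun_mul (hBd 0 z hz)).const_sub 1).fun_inv
      (hden z hz).ne').congr_deriv ?_
    rw [neg_neg, div_eq_inv_mul]
    congr 1
    simp [D, sq]
  have hcl : ∀ f, PosAlg A B D f → ∃ g, PosAlg A B D g ∧ ∀ z ∈ s, HasDerivAt f (g z) z :=
    fun f hf => hf.exists_deriv hA hB hD
  have key : ∀ w d : ℝ → ℝ, PosAlg A B D d → (∀ z ∈ s, HasDerivAt w (d z) z) →
      0 ≤ iteratedDeriv (n + 1) w z := fun w d hd hw => by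
    obtain ⟨g, hg, hg'⟩ := hd.exists_iteratedDeriv hs hcl n
    have h : deriv w =ᶠ[nhds z] d := by
      filter_upwards [hs.mem_nhds hz] with y hy using (hw y hy).deriv
    rw [iteratedDeriv_succ', h.iteratedDeriv_eq, hg' z hz]
    exact hg.nonneg (hP' z hz) (hQ' z hz) (inv_pos.2 (hden z hz)).le
  exact ⟨key u _ hdu fun z hz => by rw [← hd1 z hz]; exact hu z hz,
    key v _ hdv fun z hz => by rw [← hd2 z hz]; exact hv z hz⟩

/-! ### The domain of `F̂` and its behaviour up to `h*` -/

lemma Fhat_eq {μ ν : Measure ℝ} (h : ℝ) : Fhat μ ν h = Ginv μ (Gst ν h) + (Gst ν h)⁻¹ + h := by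
  simp [Fhat, Rhat, inv_neg]

lemma Hhat_bddAbove {μ ν : Measure ℝ} : BddAbove (Hhat μ ν) := ⟨aInf ν, fun _ hh => hh.1.1.le⟩

section FhatBasic
variable {μ ν : Measure ℝ} [IsProbabilityMeasure μ] [IsProbabilityMeasure ν]

lemma mem_FhatDom (hcμ : HasCompactSupp μ) (hcν : HasCompactSupp ν) {h : ℝ} :
    h ∈ FhatDom μ ν ↔ h < aInf ν ∧ ∃ w < aInf μ, Gst μ w = Gst ν h :=
  and_congr_right fun hh => neg_mem_Dhat hcμ (Gst_pos hcν hh)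

lemma Fhat_analyticAt (hcμ : HasCompactSupp μ) (hcν : HasCompactSupp ν) {h : ℝ}
    (hh : h ∈ FhatDom μ ν) : AnalyticAt ℝ (Fhat μ ν) h := by
  obtain ⟨h1, w, hw, hwg⟩ := (mem_FhatDom hcμ hcν).1 hh
  have h2 : AnalyticAt ℝ (Ginv μ) (Gst ν h) := hwg ▸ (Ginv_analyticAt hcμ hw).1
  have h3 : Fhat μ ν = fun h => Ginv μ (Gst ν h) + (Gst ν h)⁻¹ + h := funext Fhat_eq
  rw [h3]
  exact ((h2.fun_comp (Gst_analyticAt hcν h1)).fun_add (Gst_inv_analyticAt hcν h1)).fun_add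
    analyticAt_id

lemma FhatDom_of_le (hcμ : HasCompactSupp μ) (hcν : HasCompactSupp ν) {h t : ℝ}
    (hh : h ∈ FhatDom μ ν) (ht : t ≤ h) : t ∈ FhatDom μ ν := by
  obtain ⟨h1, w, hw, hwg⟩ := (mem_FhatDom hcμ hcν).1 hh
  have h2 := ht.trans_lt h1
  refine (mem_FhatDom hcμ hcν).2 ⟨h2, exists_Gst_eq hcμ hw (Gst_pos hcν h2) ?_⟩
  rw [hwg]
  exact (Gst_strictMonoOn hcν).monotoneOn h2 h1 ht

lemma FhatDom_mem_nhds (hcμ : HasCompactSupp μ) (hcν : HasCompactSupp ν) {h : ℝ}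
    (hh : h ∈ FhatDom μ ν) : FhatDom μ ν ∈ nhds h := by
  obtain ⟨h1, w, hw, hwg⟩ := (mem_FhatDom hcμ hcν).1 hh
  obtain ⟨w', hw1, hw2⟩ := exists_between hw
  have h2 : Gst ν h < Gst μ w' := hwg ▸ Gst_strictMonoOn hcμ hw hw2 hw1
  filter_upwards [Iio_mem_nhds h1,
    (Gst_analyticAt hcν h1).continuousAt.eventually (gt_mem_nhds h2)] with t ht1 ht2
  exact (mem_FhatDom hcμ hcν).2 ⟨ht1, exists_Gst_eq hcμ hw2 (Gst_pos hcν ht1) ht2.le⟩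

lemma FhatDom_eventually (hcμ : HasCompactSupp μ) (hcν : HasCompactSupp ν) :
    ∀ᶠ h in atBot, h ∈ FhatDom μ ν := by
  have hw : aInf μ - 1 < aInf μ := by linarith
  filter_upwards [Iio_mem_atBot (aInf ν),
    (Gst_tendsto_atBot hcν).eventually (gt_mem_nhds (Gst_pos hcμ hw))] with t ht1 ht2
  exact (mem_FhatDom hcμ hcν).2 ⟨ht1, exists_Gst_eq hcμ hw (Gst_pos hcν ht1) ht2.le⟩

lemma FhatDom_eq_Iio (hcμ : HasCompactSupp μ) (hcν : HasCompactSupp ν) :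
    ∃ hmax : ℝ, FhatDom μ ν = Iio hmax := by
  have hne : (FhatDom μ ν).Nonempty := (FhatDom_eventually hcμ hcν).exists
  have hbdd : BddAbove (FhatDom μ ν) := ⟨aInf ν, fun h hh => hh.1.le⟩
  refine ⟨sSup (FhatDom μ ν), Subset.antisymm (fun h hh => ?_) fun h hh => ?_⟩
  · have h1 : ∀ᶠ t in nhdsWithin h (Ioi h), t ∈ FhatDom μ ν :=
      mem_nhdsWithin_of_mem_nhds (FhatDom_mem_nhds hcμ hcν hh)
    obtain ⟨t, ht, hht⟩ := (h1.and self_mem_nhdsWithin).exists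
    exact lt_of_lt_of_le hht (le_csSup hbdd ht)
  · obtain ⟨t, ht, hht⟩ := exists_lt_of_lt_csSup hne hh
    exact FhatDom_of_le hcμ hcν ht hht.le

end FhatBasic

section Subordination
variable {μ ν ρ : Measure ℝ} [IsProbabilityMeasure μ] [IsProbabilityMeasure ν]
  [IsProbabilityMeasure ρ]

/-- Near `-∞` the function `F̂` is right inverse to the subordination function: this is the
defining identity of the free additive convolution, read at `u = -G_ν(h)`. -/
lemma sub_eventually {μ ν ρ : Measure ℝ} [IsProbabilityMeasure ν]
    [IsProbabilityMeasure ρ] (hcν : HasCompactSupp ν)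
    (hcρ : HasCompactSupp ρ) (hρ : IsFreeAdd μ ν ρ) :
    ∀ᶠ h in atBot, Fhat μ ν h < aInf ρ ∧ Gst ρ (Fhat μ ν h) = Gst ν h := by
  obtain ⟨-, -, ε, hε, H⟩ := hρ
  filter_upwards [Iio_mem_atBot (aInf ν),
    (Gst_tendsto_atBot hcν).eventually (gt_mem_nhds hε)] with h h1 h2
  have hg := Gst_pos hcν h1
  obtain ⟨hr, -, -, he⟩ := H (-Gst ν h) ⟨by linarith, by linarith⟩ (by linarith)
  obtain ⟨z, hz, hzg⟩ := (neg_mem_Dhat hcρ hg).1 hr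
  have h3 : Fhat μ ν h = z := by
    simp only [Rhat, neg_neg] at he
    rw [Ginv_Gst hcν h1] at he
    rw [← hzg, Ginv_Gst hcρ hz, hzg] at he
    rw [Fhat_eq]
    rw [inv_neg] at he
    linarith
  rw [h3]
  exact ⟨hz, hzg⟩

lemma Fhat_eventually_lt {μ ν ρ : Measure ℝ} [IsProbabilityMeasure ν]
    [IsProbabilityMeasure ρ] (hcν : HasCompactSupp ν)
    (hcρ : HasCompactSupp ρ) (hρ : IsFreeAdd μ ν ρ) (z : ℝ) :
    ∀ᶠ h in atBot, Fhat μ ν h < z := by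
  set y := min z (aInf ρ - 1) with hy
  have hy1 : y < aInf ρ := (min_le_right _ _).trans_lt (by linarith)
  filter_upwards [sub_eventually hcν hcρ hρ,
    (Gst_tendsto_atBot hcν).eventually (gt_mem_nhds (Gst_pos hcρ hy1))] with h h1 h2
  refine lt_of_lt_of_le ?_ (min_le_left z (aInf ρ - 1))
  rw [← h1.2] at h2
  exact ((Gst_strictMonoOn hcρ).lt_iff_lt h1.1 hy1).1 h2

lemma deriv_Fhat_pos_of_sub (hcμ : HasCompactSupp μ) (hcν : HasCompactSupp ν)
    (hcρ : HasCompactSupp ρ) {h : ℝ} (hh : h ∈ FhatDom μ ν) (hlt : Fhat μ ν h < aInf ρ)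
    (hs : ∀ᶠ t in nhds h, Gst ρ (Fhat μ ν t) = Gst ν t) : 0 < deriv (Fhat μ ν) h := by
  have h1 := (Gst_analyticAt hcρ hlt).differentiableAt.hasDerivAt.comp h
    (Fhat_analyticAt hcμ hcν hh).differentiableAt.hasDerivAt
  have h2 := (Gst_analyticAt hcν hh.1).differentiableAt.hasDerivAt.congr_of_eventuallyEq hs
  have h3 := h1.unique h2
  rw [deriv_Gst hcρ hlt, deriv_Gst hcν hh.1] at h3
  exact pos_of_mul_pos_right (h3 ▸ Mst_pos hcν hh.1 1) (Mst_pos hcρ hlt 1).le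

lemma exists_deriv_Fhat_pos (hcμ : HasCompactSupp μ) (hcν : HasCompactSupp ν)
    (hcρ : HasCompactSupp ρ) (hρ : IsFreeAdd μ ν ρ) :
    ∃ h₀ ∈ FhatDom μ ν, ∀ h ∈ FhatDom μ ν, h < h₀ → 0 < deriv (Fhat μ ν) h := by
  obtain ⟨h₀, hh⟩ := eventually_atBot.1
    ((sub_eventually hcν hcρ hρ).and (FhatDom_eventually hcμ hcν))
  refine ⟨h₀, (hh h₀ le_rfl).2, fun h hd hlt => ?_⟩
  refine deriv_Fhat_pos_of_sub hcμ hcν hcρ hd (hh h hlt.le).1.1 ?_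
  filter_upwards [Iio_mem_nhds hlt] with t ht using (hh t (le_of_lt ht)).1.2

lemma Hhat_nonempty (hcμ : HasCompactSupp μ) (hcν : HasCompactSupp ν)
    (hcρ : HasCompactSupp ρ) (hρ : IsFreeAdd μ ν ρ) : (Hhat μ ν).Nonempty := by
  obtain ⟨h₀, h1, h2⟩ := exists_deriv_Fhat_pos hcμ hcν hcρ hρ
  exact ⟨h₀, h1, h2⟩

lemma of_lt_hstar (hcμ : HasCompactSupp μ) (hcν : HasCompactSupp ν)
    (hcρ : HasCompactSupp ρ) (hρ : IsFreeAdd μ ν ρ) {t : ℝ} (ht : t < hstar μ ν) :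
    t ∈ FhatDom μ ν ∧ 0 < deriv (Fhat μ ν) t := by
  obtain ⟨h, hh, hth⟩ := exists_lt_of_lt_csSup (Hhat_nonempty hcμ hcν hcρ hρ) ht
  have h1 := FhatDom_of_le hcμ hcν hh.1 hth.le
  exact ⟨h1, hh.2 t h1 hth⟩

lemma Fhat_strictMonoOn (hcμ : HasCompactSupp μ) (hcν : HasCompactSupp ν)
    (hcρ : HasCompactSupp ρ) (hρ : IsFreeAdd μ ν ρ) :
    StrictMonoOn (Fhat μ ν) (Iio (hstar μ ν)) := by
  refine strictMonoOn_of_deriv_pos (convex_Iio _) (fun t ht => ?_) fun t ht => ?_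
  · exact (Fhat_analyticAt hcμ hcν
      (of_lt_hstar hcμ hcν hcρ hρ ht).1).continuousAt.continuousWithinAt
  · rw [interior_Iio] at ht
    exact (of_lt_hstar hcμ hcν hcρ hρ ht).2

/-- Analytic continuation of the subordination identity along `(-∞, t)`. -/
lemma sub_of_lt (hcμ : HasCompactSupp μ) (hcν : HasCompactSupp ν)
    (hcρ : HasCompactSupp ρ) (hρ : IsFreeAdd μ ν ρ) {t : ℝ} (ht : ∀ h < t, h ∈ FhatDom μ ν)
    (hF : ∀ h < t, Fhat μ ν h < aInf ρ) : ∀ h < t, Gst ρ (Fhat μ ν h) = Gst ν h := by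
  obtain ⟨h₀, hh⟩ := eventually_atBot.1 (sub_eventually hcν hcρ hρ)
  have h1 : min h₀ t - 1 < h₀ := by linarith [min_le_left h₀ t]
  have h2 : min h₀ t - 1 < t := by linarith [min_le_right h₀ t]
  refine AnalyticOnNhd.eqOn_of_preconnected_of_eventuallyEq (𝕜 := ℝ)
    (f := fun h => Gst ρ (Fhat μ ν h)) (U := Iio t)
    (fun h hlt => (Gst_analyticAt hcρ (hF h hlt)).fun_comp (Fhat_analyticAt hcμ hcν (ht h hlt)))
    (fun h hlt => Gst_analyticAt hcν (ht h hlt).1) isPreconnected_Iio h2 ?_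
  filter_upwards [Iio_mem_nhds h1] with h hlt using (hh h (le_of_lt hlt)).2

/-- `F̂` stays below the edge of `ρ` up to `h*`: reaching `aInf ρ` at some `h₁ < h*` would continue
`G_ρ` analytically through its edge. -/
lemma Fhat_lt_aInf (hcμ : HasCompactSupp μ) (hcν : HasCompactSupp ν)
    (hcρ : HasCompactSupp ρ) (hρ : IsFreeAdd μ ν ρ) {h : ℝ} (hh : h < hstar μ ν) :
    Fhat μ ν h < aInf ρ := by
  by_contra! hcon
  obtain ⟨y, hy, hyh⟩ := ((Fhat_eventually_lt hcν hcρ hρ (aInf ρ)).and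
    (Iic_mem_atBot h)).exists
  have hcont : ContinuousOn (Fhat μ ν) (Icc y h) := fun t ht =>
    (Fhat_analyticAt hcμ hcν
      (of_lt_hstar hcμ hcν hcρ hρ (ht.2.trans_lt hh)).1).continuousAt.continuousWithinAt
  obtain ⟨t, ht, hta⟩ := intermediate_value_Icc hyh hcont ⟨hy.le, hcon⟩
  have htH := ht.2.trans_lt hh
  obtain ⟨htd, htp⟩ := of_lt_hstar hcμ hcν hcρ hρ htH
  refine no_analytic_extension_comp hcρ (Fhat_analyticAt hcμ hcν htd) htp
    (Gst_analyticAt hcν htd.1) ?_ hta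
  refine eventually_nhdsWithin_of_forall (sub_of_lt hcμ hcν hcρ hρ
    (fun s hs => (of_lt_hstar hcμ hcν hcρ hρ (lt_trans hs htH)).1) fun s hs => ?_)
  rw [← hta]
  exact Fhat_strictMonoOn hcμ hcν hcρ hρ (lt_trans hs htH) htH hs

lemma sub_of_lt_hstar (hcμ : HasCompactSupp μ) (hcν : HasCompactSupp ν)
    (hcρ : HasCompactSupp ρ) (hρ : IsFreeAdd μ ν ρ) {h : ℝ} (hh : h < hstar μ ν) :
    Gst ρ (Fhat μ ν h) = Gst ν h :=
  sub_of_lt hcμ hcν hcρ hρ (fun _ ht => (of_lt_hstar hcμ hcν hcρ hρ ht).1)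
    (fun _ ht => Fhat_lt_aInf hcμ hcν hcρ hρ ht) h hh

end Subordination

/-! ### The limit of `F̂` at `h*` -/

/-- With `g = G_ν(w₂)`, the relation `w₁ + 1/g + w₂ = z` gives one of the two subordination
equations. -/
lemma add_Hst_eq {ν : Measure ℝ} {g z w₁ w₂ : ℝ} (h : Gst ν w₂ = g) (hs : w₁ + g⁻¹ + w₂ = z) :
    w₁ = z + Hst ν w₂ := by
  rw [Hst, h]; linarith

section Edge
variable {μ ν ρ : Measure ℝ} [IsProbabilityMeasure μ] [IsProbabilityMeasure ν]
  [IsProbabilityMeasure ρ]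

lemma Ginv_comp_Gst_analyticAt (hcμ : HasCompactSupp μ) (hcρ : HasCompactSupp ρ) {z w : ℝ}
    (hz : z < aInf ρ) (hw : w < aInf μ) (h : Gst μ w = Gst ρ z) :
    AnalyticAt ℝ (fun y => Ginv μ (Gst ρ y)) z ∧
      HasDerivAt (fun y => Ginv μ (Gst ρ y)) ((Mst μ 1 w)⁻¹ * Mst ρ 1 z) z := by
  obtain ⟨h1, h2⟩ := Ginv_analyticAt hcμ hw
  rw [h] at h1 h2
  refine ⟨h1.fun_comp (Gst_analyticAt hcρ hz), ?_⟩
  have h3 := (Gst_analyticAt hcρ hz).differentiableAt.hasDerivAt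
  rw [deriv_Gst hcρ hz] at h3
  exact h2.comp z h3

/-- If a function `w` with `G_μ ∘ w = G_ρ` and `w' ≥ 1` left of `Z < aInf ρ` extends analytically
to `Z`, then its extension stays strictly below the edge of `μ` at `Z`. -/
lemma extension_lt_aInf (hcμ : HasCompactSupp μ) (hcρ : HasCompactSupp ρ) {Z : ℝ}
    (hZ : Z < aInf ρ) {w d Ω : ℝ → ℝ} (hΩ : AnalyticAt ℝ Ω Z)
    (hΩw : ∀ᶠ z in nhdsWithin Z (Iio Z), Ω z = w z) (hwd : ∀ z < Z, HasDerivAt w (d z) z)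
    (hd : ∀ z < Z, 1 ≤ d z) (hwa : ∀ z < Z, w z < aInf μ) (hG : ∀ z < Z, Gst μ (w z) = Gst ρ z) :
    1 ≤ deriv Ω Z ∧ Ω Z < aInf μ ∧ Gst μ (Ω Z) = Gst ρ Z := by
  have h1 : 1 ≤ deriv Ω Z := by
    refine ge_of_tendsto (hΩ.deriv.continuousAt.tendsto.mono_left
      (nhdsWithin_le_nhds (s := Iio Z))) ?_
    filter_upwards [eventually_eventually_nhdsWithin.2 hΩw, self_mem_nhdsWithin] with z h1 hz
    rw [IsOpen.nhdsWithin_eq isOpen_Iio hz] at h1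
    have h2 : Ω =ᶠ[nhds z] w := h1
    rw [h2.deriv_eq, (hwd z hz).deriv]
    exact hd z hz
  have hlim := hΩ.continuousAt.tendsto.mono_left (nhdsWithin_le_nhds (s := Iio Z))
  have h2 : Ω Z ≤ aInf μ := by
    refine le_of_tendsto hlim ?_
    filter_upwards [hΩw, self_mem_nhdsWithin] with z h hz
    rw [h]
    exact (hwa z hz).le
  have hGev : ∀ᶠ z in nhdsWithin Z (Iio Z), Gst μ (Ω z) = Gst ρ z := by
    filter_upwards [hΩw, self_mem_nhdsWithin] with z h hz
    rw [h, hG z hz]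
  have h3 := no_analytic_extension_comp hcμ hΩ (zero_lt_one.trans_le h1)
    (Gst_analyticAt hcρ hZ) hGev
  have h4 := lt_of_le_of_ne h2 h3
  refine ⟨h1, h4, ?_⟩
  refine tendsto_nhds_unique (((Gst_analyticAt hcμ h4).continuousAt.tendsto.comp hlim).congr' hGev)
    ((Gst_analyticAt hcρ hZ).continuousAt.tendsto.mono_left nhdsWithin_le_nhds)

/-- The two subordination functions, if they solve the subordination equations on `(-∞, Z)` and
`Z < aInf ρ`, both extend analytically to `Z`: their Taylor coefficients of positive order are
nonnegative and add up to those of `z - 1 / G_ρ(z)`, which is analytic at `Z`. -/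
lemma exists_extension (hcμ : HasCompactSupp μ) (hcν : HasCompactSupp ν) (hcρ : HasCompactSupp ρ)
    {Z : ℝ} (hZ : Z < aInf ρ) {u v : ℝ → ℝ} (hu : u = fun z => Ginv μ (Gst ρ z))
    (hv : v = fun z => Ginv ν (Gst ρ z)) (hua : ∀ z < Z, u z < aInf μ)
    (hva : ∀ z < Z, v z < aInf ν) (hGu : ∀ z < Z, Gst μ (u z) = Gst ρ z)
    (hGv : ∀ z < Z, Gst ν (v z) = Gst ρ z) (hs : ∀ z < Z, u z + (Gst ρ z)⁻¹ + v z = z) :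
    (∃ Ω, AnalyticAt ℝ Ω Z ∧ (∀ᶠ z in nhdsWithin Z (Iio Z), Ω z = u z) ∧
      1 ≤ deriv Ω Z ∧ Ω Z < aInf μ ∧ Gst μ (Ω Z) = Gst ρ Z) ∧
    (∃ Ω, AnalyticAt ℝ Ω Z ∧ (∀ᶠ z in nhdsWithin Z (Iio Z), Ω z = v z) ∧
      1 ≤ deriv Ω Z ∧ Ω Z < aInf ν ∧ Gst ν (Ω Z) = Gst ρ Z) := by
  have hzρ : ∀ z < Z, z < aInf ρ := fun z hz => hz.trans hZ
  have hu' := fun z (hz : z < Z) => Ginv_comp_Gst_analyticAt hcμ hcρ (hzρ z hz) (hua z hz)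
    (hGu z hz)
  have hv' := fun z (hz : z < Z) => Ginv_comp_Gst_analyticAt hcν hcρ (hzρ z hz) (hva z hz)
    (hGv z hz)
  rw [← hu] at hu'
  rw [← hv] at hv'
  set d1 : ℝ → ℝ := fun z => (Mst μ 1 (u z))⁻¹ * Mst ρ 1 z with hd1
  set d2 : ℝ → ℝ := fun z => (Mst ν 1 (v z))⁻¹ * Mst ρ 1 z with hd2
  have p1 : ∀ z < Z, 0 < d1 z := fun z hz =>
    mul_pos (inv_pos.2 (Mst_pos hcμ (hua z hz) 1)) (Mst_pos hcρ (hzρ z hz) 1)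
  have p2 : ∀ z < Z, 0 < d2 z := fun z hz =>
    mul_pos (inv_pos.2 (Mst_pos hcν (hva z hz) 1)) (Mst_pos hcρ (hzρ z hz) 1)
  have h1 : ∀ z ∈ Iio Z, d1 z = 1 + deriv (Hst ν) (v z) * d2 z := fun z hz => by
    have e1 := (hasDerivAt_id' z).fun_add
      ((Hst_analyticAt hcν (hva z hz)).differentiableAt.hasDerivAt.comp z (hv' z hz).2)
    refine ((hu' z hz).2.congr_of_eventuallyEq ?_).unique e1
    filter_upwards [Iio_mem_nhds hz] with y hy
    exact (add_Hst_eq (hGv y hy) (hs y hy)).symm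
  have h2 : ∀ z ∈ Iio Z, d2 z = 1 + deriv (Hst μ) (u z) * d1 z := fun z hz => by
    have e1 := (hasDerivAt_id' z).fun_add
      ((Hst_analyticAt hcμ (hua z hz)).differentiableAt.hasDerivAt.comp z (hu' z hz).2)
    refine ((hv' z hz).2.congr_of_eventuallyEq ?_).unique e1
    filter_upwards [Iio_mem_nhds hz] with y hy
    exact (add_Hst_eq (hGu y hy) (by linarith [hs y hy])).symm
  have hHν : ∀ z < Z, 0 ≤ deriv (Hst ν) (v z) := fun z hz => by
    simpa using iteratedDeriv_Hst_nonneg hcν (hva z hz) 0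
  have hHμ : ∀ z < Z, 0 ≤ deriv (Hst μ) (u z) := fun z hz => by
    simpa using iteratedDeriv_Hst_nonneg hcμ (hua z hz) 0
  have g1 : ∀ z < Z, 1 ≤ d1 z := fun z hz => by
    rw [h1 z hz]; nlinarith [mul_nonneg (hHν z hz) (p2 z hz).le]
  have g2 : ∀ z < Z, 1 ≤ d2 z := fun z hz => by
    rw [h2 z hz]; nlinarith [mul_nonneg (hHμ z hz) (p1 z hz).le]
  have hnn : ∀ n, ∀ z < Z, 0 ≤ iteratedDeriv (n + 1) u z ∧ 0 ≤ iteratedDeriv (n + 1) v z :=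
    fun n z hz => iteratedDeriv_nonneg_of_coupled isOpen_Iio
      (fun z hz => Hst_analyticAt hcν (hva z hz)) (fun z hz => Hst_analyticAt hcμ (hua z hz))
      (fun z hz => iteratedDeriv_Hst_nonneg hcν (hva z hz))
      (fun z hz => iteratedDeriv_Hst_nonneg hcμ (hua z hz))
      (fun z hz => (hu' z hz).2) (fun z hz => (hv' z hz).2) h1 h2 p1 n hz
  let S : ℝ → ℝ := fun z => z - (Gst ρ z)⁻¹
  have hS : AnalyticAt ℝ S Z := analyticAt_id.fun_sub (Gst_inv_analyticAt hcρ hZ)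
  have hsum : ∀ z < Z, ∀ n, tcoef S z n = tcoef u z n + tcoef v z n := fun z hz n => by
    have e : S =ᶠ[nhds z] u + v := by
      filter_upwards [Iio_mem_nhds hz] with y hy
      have := hs y hy
      simp only [S, Pi.add_apply]
      linarith
    rw [tcoef, e.iteratedDeriv_eq, iteratedDeriv_add (hu' z hz).1.contDiffAt
      (hv' z hz).1.contDiffAt, add_div]
    rfl
  have hc : ∀ z < Z, ∀ n ≥ 1, 0 ≤ tcoef u z n ∧ 0 ≤ tcoef v z n := fun z hz n hn => by
    obtain ⟨n, rfl⟩ : ∃ m, n = m + 1 := ⟨n - 1, by omega⟩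
    exact ⟨div_nonneg (hnn n z hz).1 (by positivity), div_nonneg (hnn n z hz).2 (by positivity)⟩
  have hlt : Z - 1 < Z := by linarith
  obtain ⟨Ω₁, hΩ₁, hw₁⟩ := extend_of_taylor_le hlt (fun z hz => (hu' z hz.2).1) hS
    fun z hz n hn => by
      obtain ⟨q1, q2⟩ := hc z hz.2 n hn
      rw [hsum z hz.2 n, abs_of_nonneg q1, abs_of_nonneg (add_nonneg q1 q2)]
      linarith
  obtain ⟨Ω₂, hΩ₂, hw₂⟩ := extend_of_taylor_le hlt (fun z hz => (hv' z hz.2).1) hS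
    fun z hz n hn => by
      obtain ⟨q1, q2⟩ := hc z hz.2 n hn
      rw [hsum z hz.2 n, abs_of_nonneg q2, abs_of_nonneg (add_nonneg q1 q2)]
      linarith
  exact ⟨⟨Ω₁, hΩ₁, hw₁, extension_lt_aInf hcμ hcρ hZ hΩ₁ hw₁ (fun z hz => (hu' z hz).2) g1 hua
    hGu⟩, ⟨Ω₂, hΩ₂, hw₂, extension_lt_aInf hcν hcρ hZ hΩ₂ hw₂ (fun z hz => (hv' z hz).2) g2 hva
    hGv⟩⟩

/-- At a point of the domain, `h*` can only be a zero of `F̂'`: otherwise `F̂' > 0` slightly beyond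
`h*` as well. -/
lemma not_deriv_Fhat_pos_hstar (hcμ : HasCompactSupp μ) (hcν : HasCompactSupp ν)
    (hcρ : HasCompactSupp ρ) (hρ : IsFreeAdd μ ν ρ) (hd : hstar μ ν ∈ FhatDom μ ν) :
    ¬ 0 < deriv (Fhat μ ν) (hstar μ ν) := by
  intro hp
  have h1 := (Fhat_analyticAt hcμ hcν hd).deriv.continuousAt.eventually (lt_mem_nhds hp)
  obtain ⟨δ, hδ, hball⟩ := Metric.eventually_nhds_iff.1 (h1.and (FhatDom_mem_nhds hcμ hcν hd))
  have h2 : hstar μ ν + δ / 2 ∈ Hhat μ ν := by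
    refine ⟨(hball ?_).2, fun t _ ht2 => ?_⟩
    · rw [Real.dist_eq, add_sub_cancel_left, abs_of_pos (by positivity)]; linarith
    · rcases lt_or_ge t (hstar μ ν) with h | h
      · exact (of_lt_hstar hcμ hcν hcρ hρ h).2
      · refine (hball ?_).1
        rw [Real.dist_eq, abs_of_nonneg (by linarith)]
        linarith
  have h3 : hstar μ ν + δ / 2 ≤ hstar μ ν := le_csSup Hhat_bddAbove h2
  linarith

/-- The values of `F̂` left of `h*` exhaust `(-∞, aInf ρ)`. If they stopped at `Z < aInf ρ`, both
subordination functions would extend analytically to `Z`, placing `h*` in the domain of `F̂`, and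
inverting `F̂` there would give `F̂'(h*) > 0`. -/
lemma sSup_Fhat_Iio (hcμ : HasCompactSupp μ) (hcν : HasCompactSupp ν)
    (hcρ : HasCompactSupp ρ) (hρ : IsFreeAdd μ ν ρ) :
    sSup (Fhat μ ν '' Iio (hstar μ ν)) = aInf ρ := by
  set H := hstar μ ν with hH
  set Z := sSup (Fhat μ ν '' Iio H) with hZdef
  have hmono := Fhat_strictMonoOn hcμ hcν hcρ hρ
  have hbdd : BddAbove (Fhat μ ν '' Iio H) := by
    refine ⟨aInf ρ, ?_⟩
    rintro _ ⟨h, hh, rfl⟩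
    exact (Fhat_lt_aInf hcμ hcν hcρ hρ hh).le
  have hne : (Fhat μ ν '' Iio H).Nonempty := nonempty_Iio.image _
  have hle : Z ≤ aInf ρ := csSup_le hne (by
    rintro _ ⟨h, hh, rfl⟩
    exact (Fhat_lt_aInf hcμ hcν hcρ hρ hh).le)
  by_contra hneq
  have hZ : Z < aInf ρ := lt_of_le_of_ne hle hneq
  have hltZ : ∀ h < H, Fhat μ ν h < Z := fun h hh => by
    obtain ⟨t, h1, h2⟩ := exists_between hh
    exact (hmono hh h2 h1).trans_le (le_csSup hbdd ⟨t, h2, rfl⟩)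
  have hlim : Tendsto (Fhat μ ν) (nhdsWithin H (Iio H)) (nhds Z) :=
    hmono.monotoneOn.tendsto_nhdsLT hbdd
  have hlim' : Tendsto (Fhat μ ν) (nhdsWithin H (Iio H)) (nhdsWithin Z (Iio Z)) :=
    tendsto_nhdsWithin_iff.2 ⟨hlim, eventually_nhdsWithin_of_forall hltZ⟩
  -- `F̂` maps `(-∞, h*)` onto `(-∞, Z)`
  have hsurj : ∀ z < Z, ∃ h < H, Fhat μ ν h = z := fun z hz => by
    obtain ⟨_, ⟨t, ht, rfl⟩, hzt⟩ := exists_lt_of_lt_csSup hne hz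
    obtain ⟨y, hy, hyt⟩ := ((Fhat_eventually_lt hcν hcρ hρ z).and (Iic_mem_atBot t)).exists
    have hcont : ContinuousOn (Fhat μ ν) (Icc y t) := fun s hs =>
      (Fhat_analyticAt hcμ hcν
        (of_lt_hstar hcμ hcν hcρ hρ (hs.2.trans_lt ht)).1).continuousAt.continuousWithinAt
    obtain ⟨h, hh, he⟩ := intermediate_value_Icc hyt hcont ⟨hy.le, hzt.le⟩
    exact ⟨h, hh.2.trans_lt ht, he⟩
  have hspec : ∀ h < H, Ginv ν (Gst ρ (Fhat μ ν h)) = h ∧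
      Ginv μ (Gst ρ (Fhat μ ν h)) < aInf μ ∧
      Gst μ (Ginv μ (Gst ρ (Fhat μ ν h))) = Gst ρ (Fhat μ ν h) ∧
      Ginv μ (Gst ρ (Fhat μ ν h)) + (Gst ρ (Fhat μ ν h))⁻¹ + h = Fhat μ ν h := fun h hh => by
    obtain ⟨hd, -⟩ := of_lt_hstar hcμ hcν hcρ hρ hh
    obtain ⟨h1, w, hw, hwg⟩ := (mem_FhatDom hcμ hcν).1 hd
    rw [sub_of_lt_hstar hcμ hcν hcρ hρ hh, ← Fhat_eq]
    refine ⟨Ginv_Gst hcν h1, ?_, ?_, rfl⟩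
    · rw [← hwg, Ginv_Gst hcμ hw]; exact hw
    · rw [← hwg, Ginv_Gst hcμ hw]
  have hdomlt : ∀ h < H, h < aInf ν := fun h hh => (of_lt_hstar hcμ hcν hcρ hρ hh).1.1
  obtain ⟨⟨Ω₁, hΩ₁, -, -, ha₁, hG₁⟩, ⟨Ω₂, hΩ₂, hw₂, hd₂, ha₂, hG₂⟩⟩ :=
    exists_extension hcμ hcν hcρ hZ rfl rfl
      (fun z hz => by
        obtain ⟨h, hh, rfl⟩ := hsurj z hz
        exact (hspec h hh).2.1)
      (fun z hz => by
        obtain ⟨h, hh, rfl⟩ := hsurj z hz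
        rw [(hspec h hh).1]
        exact hdomlt h hh)
      (fun z hz => by
        obtain ⟨h, hh, rfl⟩ := hsurj z hz
        exact (hspec h hh).2.2.1)
      (fun z hz => by
        obtain ⟨h, hh, rfl⟩ := hsurj z hz
        rw [(hspec h hh).1]
        exact (sub_of_lt_hstar hcμ hcν hcρ hρ hh).symm)
      (fun z hz => by
        obtain ⟨h, hh, rfl⟩ := hsurj z hz
        rw [(hspec h hh).1]
        exact (hspec h hh).2.2.2)
  have hΩ₂H : Ω₂ Z = H := by
    refine tendsto_nhds_unique (hΩ₂.continuousAt.tendsto.comp hlim) ?_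
    refine (tendsto_nhdsWithin_of_tendsto_nhds tendsto_id).congr' ?_
    filter_upwards [hlim'.eventually hw₂, self_mem_nhdsWithin] with h h1 hh
    simp only [id, Function.comp]
    rw [h1, (hspec h hh).1]
  rw [hΩ₂H] at ha₂ hG₂
  have hdom : H ∈ FhatDom μ ν := (mem_FhatDom hcμ hcν).2 ⟨ha₂, Ω₁ Z, ha₁, hG₁.trans hG₂.symm⟩
  have hFan : AnalyticAt ℝ (Fhat μ ν) (Ω₂ Z) := by
    rw [hΩ₂H]; exact Fhat_analyticAt hcμ hcν hdom
  have hid : ∀ᶠ z in nhdsWithin Z (Iio Z), Fhat μ ν (Ω₂ z) = z := by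
    filter_upwards [hw₂, self_mem_nhdsWithin] with z h1 hz
    obtain ⟨h, hh, rfl⟩ := hsurj z hz
    rw [h1, (hspec h hh).1]
  have hid' : (fun z => Fhat μ ν (Ω₂ z)) =ᶠ[nhds Z] fun z => z := by
    refine ((hFan.fun_comp hΩ₂).frequently_eq_iff_eventually_eq analyticAt_id).1 ?_
    exact hid.frequently.filter_mono (nhdsWithin_mono _ fun z hz => ne_of_lt hz)
  have h1 := (hFan.differentiableAt.hasDerivAt.comp Z hΩ₂.differentiableAt.hasDerivAt).unique
    ((hasDerivAt_id' Z).congr_of_eventuallyEq hid')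
  rw [hΩ₂H] at h1
  refine not_deriv_Fhat_pos_hstar hcμ hcν hcρ hρ hdom ?_
  exact pos_of_mul_pos_left (h1 ▸ zero_lt_one) (zero_le_one.trans hd₂)

end Edge

/-- characterization of `g*_ρ` and `z*_ρ` in terms of `F̂_{μ,ν}`. -/
theorem statement3 (μ ν ρ : MeasureTheory.Measure ℝ)
    [MeasureTheory.IsProbabilityMeasure μ] [MeasureTheory.IsProbabilityMeasure ν]
    (hcμ : HasCompactSupp μ) (hcν : HasCompactSupp ν) (hnd : Nondeg μ)
    (hρ : IsFreeAdd μ ν ρ) :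
    (∃ hmax : ℝ, FhatDom μ ν = Set.Iio hmax) ∧
    (∃ h₀ ∈ FhatDom μ ν, ∀ h ∈ FhatDom μ ν, h < h₀ → 0 < deriv (Fhat μ ν) h) ∧
    Filter.Tendsto (fun h => ((Gst ν h : ℝ) : EReal))
      (nhdsWithin (hstar μ ν) (Set.Iio (hstar μ ν))) (nhds (GaSup ρ)) ∧
    Filter.Tendsto (Fhat μ ν)
      (nhdsWithin (hstar μ ν) (Set.Iio (hstar μ ν))) (nhds (aInf ρ)) ∧
    aInf ρ = sSup (Fhat μ ν '' Hhat μ ν) := by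
  have := hρ.1
  have hcρ := hρ.2.1
  have hF := fun h (hh : h < hstar μ ν) => Fhat_lt_aInf hcμ hcν hcρ hρ hh
  have hbdd : BddAbove (Fhat μ ν '' Iio (hstar μ ν)) := by
    refine ⟨aInf ρ, ?_⟩
    rintro _ ⟨h, hh, rfl⟩
    exact (hF h hh).le
  have hlim : Tendsto (Fhat μ ν) (nhdsWithin (hstar μ ν) (Iio (hstar μ ν))) (nhds (aInf ρ)) := by
    rw [← sSup_Fhat_Iio hcμ hcν hcρ hρ]
    exact (Fhat_strictMonoOn hcμ hcν hcρ hρ).monotoneOn.tendsto_nhdsLT hbdd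
  refine ⟨FhatDom_eq_Iio hcμ hcν, exists_deriv_Fhat_pos hcμ hcν hcρ hρ, ?_, hlim, ?_⟩
  · have h1 : Tendsto (Fhat μ ν) (nhdsWithin (hstar μ ν) (Iio (hstar μ ν)))
        (nhdsWithin (aInf ρ) (Iio (aInf ρ))) :=
      tendsto_nhdsWithin_iff.2 ⟨hlim, eventually_nhdsWithin_of_forall hF⟩
    refine ((Gst_tendsto_GaSup hcρ).comp h1).congr' ?_
    filter_upwards [self_mem_nhdsWithin] with h hh
    simp only [Function.comp, sub_of_lt_hstar hcμ hcν hcρ hρ hh]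
  · -- `h*` itself may belong to `Ĥ`; there the value of `F̂` is its left limit
    have hle : ∀ h ∈ Hhat μ ν, Fhat μ ν h ≤ aInf ρ := fun h hh => by
      have h0 : h ≤ hstar μ ν := le_csSup Hhat_bddAbove hh
      rcases h0.lt_or_eq with h1 | h1
      · exact (hF h h1).le
      · rw [h1] at hh ⊢
        exact (tendsto_nhds_unique ((Fhat_analyticAt hcμ hcν hh.1).continuousAt.tendsto.mono_left
          nhdsWithin_le_nhds) hlim).le
    refine le_antisymm ?_ (csSup_le ((Hhat_nonempty hcμ hcν hcρ hρ).image _) ?_)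
    · rw [← sSup_Fhat_Iio hcμ hcν hcρ hρ]
      refine csSup_le_csSup ⟨aInf ρ, ?_⟩ (nonempty_Iio.image _) (image_mono fun h hh => ?_)
      · rintro _ ⟨h, hh, rfl⟩
        exact hle h hh
      · exact ⟨(of_lt_hstar hcμ hcν hcρ hρ hh).1,
          fun t _ ht => (of_lt_hstar hcμ hcν hcρ hρ (ht.trans hh)).2⟩
    · rintro _ ⟨h, hh, rfl⟩
      exact hle h hh
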